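/- In every 3-connected graph with δ ≥ α, the circumference satisfies c ≥ min{n, 3δ − 3}. -/

import Mathlib

open SimpleGraph

variable {V : Type*}

/-- `G` is `k`-connected: more than `k` vertices and removing fewer than `k`
vertices leaves a connected graph. -/
def KConnected (G : SimpleGraph V) [Fintype V] (k : ℕ) : Prop :=
  k < Fintype.card V ∧
    ∀ S : Finset V, S.card < k → (G.induce ((↑S : Set V)ᶜ)).Connected

/-- vertex connectivity `κ`. -/
noncomputable def connectivity (G : SimpleGraph V) [Fintype V] : ℕ :=
  sSup {k | KConnected G k}

/-- independence number `α`. -/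
noncomputable def indepNumber (G : SimpleGraph V) [Fintype V] : ℕ :=
  sSup {k | ∃ s : Finset V, (∀ u ∈ s, ∀ v ∈ s, ¬ G.Adj u v) ∧ s.card = k}

/-- circumference `c`: length of a longest cycle. -/
noncomputable def circumference (G : SimpleGraph V) [Fintype V] : ℕ :=
  sSup {n | ∃ (v : V) (w : G.Walk v v), w.IsCycle ∧ w.length = n}

/-- `w` is a longest cycle of `G`. -/
def IsLongestCycle {G : SimpleGraph V} {v : V} (w : G.Walk v v) : Prop :=
  w.IsCycle ∧ ∀ (u : V) (w' : G.Walk u u), w'.IsCycle → w'.length ≤ w.length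

/-- dominating cycle: every edge has an endpoint on the cycle. -/
def IsDominatingCycle {G : SimpleGraph V} {v : V} (w : G.Walk v v) : Prop :=
  w.IsCycle ∧ ∀ x y, G.Adj x y → x ∈ w.support ∨ y ∈ w.support

/-- generalized cycle of length `n` with vertex set `W`: single vertices are
cycles of length 1, edges are cycles of length 2. -/
def ExtCycle (G : SimpleGraph V) (W : Set V) (n : ℕ) : Prop :=
  (n = 1 ∧ ∃ v : V, W = {v}) ∨
  (n = 2 ∧ ∃ u v : V, G.Adj u v ∧ W = {u, v}) ∨
  (3 ≤ n ∧ ∃ (v : V) (w : G.Walk v v), w.IsCycle ∧ w.length = n ∧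
      W = {x | x ∈ w.support})

/-- `p̄`: the length of a longest path in `G \ C`. -/
noncomputable def pathBar (G : SimpleGraph V) [Fintype V] {v : V} (w : G.Walk v v) : ℕ :=
  sSup {n | ∃ (a b : {x : V | x ∉ w.support})
      (p : (G.induce {x : V | x ∉ w.support}).Walk a b), p.IsPath ∧ p.length = n}

/-- `c̄`: the length of a longest (generalized) cycle in `G \ C`. -/
noncomputable def cycBar (G : SimpleGraph V) [Fintype V] {v : V} (w : G.Walk v v) : ℕ :=
  sSup {n | ∃ W, ExtCycle (G.induce {x : V | x ∉ w.support}) W n}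

/-- `CD_m`-cycle: every (generalized) cycle of length at least `m` meets `w`. -/
def IsCDCycle (G : SimpleGraph V) {v : V} (w : G.Walk v v) (m : ℕ) : Prop :=
  w.IsCycle ∧ ∀ (W : Set V) (n : ℕ), ExtCycle G W n → m ≤ n → ∃ x ∈ W, x ∈ w.support

/-!
Let `C` be a longest cycle, given by a periodic map `f`, and let `H` be a component of `G - C`. The
successors on `C` of the attachments of `H` form an independent set together with a vertex of `H`,
so `H` has fewer than `α ≤ δ` attachments. Hence its vertices have many neighbours inside `H`, and
as in Dirac's theorem the end blocks of `H` contain long paths between any two of their vertices. A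
path of length `l` in `H` between neighbours of two attachments forces these to be at least `l + 2`
apart on `C`, as otherwise a detour through `H` would give a longer cycle. By 3-connectedness such
long gaps occur often enough for `C` to have at least `3δ - 3` vertices.
-/

section VertexSets

open Finset

variable {G : SimpleGraph V} {W W' W₁ W₂ D : Finset V} {a b c x y z : V} {k l : ℕ}

/-- `G` has a path from `x` to `y` of length at least `k` all of whose vertices lie in `W`. -/
def HasPathIn (G : SimpleGraph V) (W : Finset V) (x y : V) (k : ℕ) : Prop :=
  ∃ p : G.Walk x y, p.IsPath ∧ (∀ z ∈ p.support, z ∈ W) ∧ k ≤ p.length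

namespace HasPathIn

lemma symm : HasPathIn G W x y k → HasPathIn G W y x k
  | ⟨p, hp, hW, hk⟩ => ⟨p.reverse, hp.reverse, by simpa using hW, by simpa using hk⟩

lemma mono (hW : W ⊆ W') (hl : l ≤ k) : HasPathIn G W x y k → HasPathIn G W' x y l
  | ⟨p, hp, hpW, hk⟩ => ⟨p, hp, fun z hz ↦ hW (hpW z hz), hl.trans hk⟩

lemma start_mem : HasPathIn G W x y k → x ∈ W
  | ⟨p, _, hW, _⟩ => hW x p.start_mem_support

lemma end_mem (h : HasPathIn G W x y k) : y ∈ W := h.symm.start_mem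

lemma one_of_ne (hxy : x ≠ y) : HasPathIn G W x y 0 → HasPathIn G W x y 1
  | ⟨p, hp, hW, _⟩ =>
    ⟨p, hp, hW, Nat.one_le_iff_ne_zero.2 fun h ↦ hxy (Walk.eq_of_length_eq_zero h)⟩

variable [DecidableEq V]

lemma cons (hab : G.Adj a b) (ha : a ∉ W) :
    HasPathIn G W b c k → HasPathIn G (insert a W) a c (k + 1)
  | ⟨p, hp, hW, hk⟩ =>
    ⟨.cons hab p, hp.cons fun h ↦ ha (hW a h),
      by simpa using fun z hz ↦ Or.inr (hW z hz), by simpa using hk⟩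

lemma append (h₁ : HasPathIn G W₁ a b k) (h₂ : HasPathIn G W₂ b c l)
    (hd : ∀ z ∈ W₁, z ∈ W₂ → z = b) : HasPathIn G (W₁ ∪ W₂) a c (k + l) := by
  obtain ⟨p, hp, hpW, hk⟩ := h₁
  obtain ⟨q, hq, hqW, hl⟩ := h₂
  have hq' : b ∉ q.support.tail ∧ q.support.tail.Nodup :=
    List.nodup_cons.1 (q.cons_tail_support ▸ hq.support_nodup)
  refine ⟨p.append q, ?_, fun z hz ↦ ?_, by simpa using by omega⟩
  · rw [Walk.isPath_def, Walk.support_append, List.nodup_append']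
    exact ⟨hp.support_nodup, hq'.2, fun z hzp hzq ↦
      hq'.1 (hd z (hpW z hzp) (hqW z (List.mem_of_mem_tail hzq)) ▸ hzq)⟩
  · rw [mem_union]
    exact ((Walk.mem_support_append_iff _ _).1 hz).imp (hpW z) (hqW z)

lemma join (h₁ : HasPathIn G W₁ a b k) (hbc : G.Adj b c) (h₂ : HasPathIn G W₂ c x l)
    (hd : Disjoint W₁ W₂) : HasPathIn G (W₁ ∪ W₂) a x (k + l + 1) := by
  have hb := disjoint_left.1 hd h₁.end_mem
  refine (h₁.append (h₂.cons hbc hb) fun z hz hz' ↦ ?_).mono ?_ (by omega)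
  · exact (mem_insert.1 hz').resolve_right (disjoint_left.1 hd hz)
  · rw [union_insert, insert_eq_of_mem (mem_union_left _ h₁.end_mem)]

end HasPathIn

/-- Any two vertices of `W` are joined by a walk inside `W`; the empty set counts as connected. -/
def ConnectedOn (G : SimpleGraph V) (W : Finset V) : Prop :=
  (G.induce (W : Set V)).Preconnected

lemma ConnectedOn.hasPathIn (h : ConnectedOn G W) (hx : x ∈ W) (hy : y ∈ W) :
    HasPathIn G W x y 0 := by
  classical
  obtain ⟨p⟩ := h ⟨x, hx⟩ ⟨y, hy⟩
  let q : G.Walk x y := p.map (Embedding.induce (W : Set V)).toHom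
  refine ⟨q.bypass, q.bypass_isPath, fun z hz ↦ ?_, Nat.zero_le _⟩
  obtain ⟨u, -, rfl⟩ := List.mem_map.1 (p.support_map _ ▸ q.support_bypass_subset_support hz)
  exact u.2

variable [DecidableEq V]

lemma ConnectedOn.exists_adj (h : ConnectedOn G W) (hD : D ⊆ W) (hne : D.Nonempty)
    (hne' : (W \ D).Nonempty) : ∃ a ∈ D, ∃ b ∈ W \ D, G.Adj a b := by
  obtain ⟨x, hx⟩ := hne
  obtain ⟨y, hy⟩ := hne'
  obtain ⟨hyW, hyD⟩ := mem_sdiff.1 hy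
  obtain ⟨p⟩ := h ⟨x, hD hx⟩ ⟨y, hyW⟩
  obtain ⟨d, -, ha, hb⟩ := p.exists_boundary_dart {u | (u : V) ∈ D} hx hyD
  exact ⟨d.fst, ha, d.snd, mem_sdiff.2 ⟨d.snd.2, hb⟩, d.adj⟩

/- Complementing a cut, one may always suppose that it avoids a given vertex. -/
lemma connectedOn_of_forall_cut (c : V)
    (h : ∀ K ⊆ W, c ∉ K → K.Nonempty → (W \ K).Nonempty → ∃ a ∈ K, ∃ b ∈ W \ K, G.Adj a b) :
    ConnectedOn G W := by
  classical
  intro x y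
  by_contra hxy
  let R (v : V) : Prop := ∃ hv : v ∈ W, (G.induce (W : Set V)).Reachable x ⟨v, hv⟩
  have hR : ∀ ⦃u v⦄, v ∈ W → G.Adj u v → R u → R v :=
    fun u v hv huv ⟨hu, hxu⟩ ↦ ⟨hv, hxu.trans (Adj.reachable (by simpa using huv))⟩
  have hxR : (x : V) ∈ W.filter R := mem_filter.2 ⟨x.2, x.2, .refl _⟩
  have hyR : (y : V) ∈ W \ W.filter R :=
    mem_sdiff.2 ⟨y.2, fun hy ↦ hxy (mem_filter.1 hy).2.2⟩
  have hcompl : W \ (W \ W.filter R) = W.filter R :=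
    Finset.sdiff_sdiff_eq_self (filter_subset _ _)
  by_cases hc : c ∈ W.filter R
  · obtain ⟨a, ha, b, hb, hab⟩ := h (W \ W.filter R) sdiff_subset
      (fun h ↦ (mem_sdiff.1 h).2 hc) ⟨y, hyR⟩ ⟨x, hcompl.symm ▸ hxR⟩
    have haW := (mem_sdiff.1 ha).1
    exact (mem_sdiff.1 ha).2 (mem_filter.2 ⟨haW, hR haW hab.symm (mem_filter.1 (hcompl ▸ hb)).2⟩)
  · obtain ⟨a, ha, b, hb, hab⟩ := h (W.filter R) (filter_subset _ _) hc ⟨x, hxR⟩ ⟨y, hyR⟩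
    have hbW := (mem_sdiff.1 hb).1
    exact (mem_sdiff.1 hb).2 (mem_filter.2 ⟨hbW, hR hbW hab (mem_filter.1 ha).2⟩)

/-- `W` is connected and has no cut vertex: it spans a block, where `K₁` and `K₂` are allowed. -/
def IsNonseparable (G : SimpleGraph V) (W : Finset V) : Prop :=
  ConnectedOn G W ∧ ∀ e, ConnectedOn G (W.erase e)

/-- `D` is a nonempty part of `W` which only the vertex `c ∈ W \ D` can separate from the rest of
`W`. It is allowed that `insert c D = W`. -/
structure IsLobe (G : SimpleGraph V) (W : Finset V) (c : V) (D : Finset V) : Prop where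
  subset : D ⊆ W
  mem : c ∈ W
  notMem : c ∉ D
  nonempty : D.Nonempty
  closed : ∀ ⦃a⦄, a ∈ D → ∀ ⦃b⦄, b ∈ W → G.Adj a b → b ∈ insert c D

/-- `insert c D` is an end block of `W`, attached to the rest of `W` at `c`. -/
structure IsEndBlock (G : SimpleGraph V) (W : Finset V) (c : V) (D : Finset V) : Prop
    extends IsLobe G W c D where
  nonseparable : IsNonseparable G (insert c D)

lemma IsNonseparable.isEndBlock_erase (h : IsNonseparable G W) (hc : c ∈ W)
    (hne : (W.erase c).Nonempty) : IsEndBlock G W c (W.erase c) where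
  subset := erase_subset c W
  mem := hc
  notMem := notMem_erase c W
  nonempty := hne
  closed a _ b hb _ := by rwa [insert_erase hc]
  nonseparable := by rwa [insert_erase hc]

namespace IsLobe

lemma insert_subset (h : IsLobe G W c D) : insert c D ⊆ W := Finset.insert_subset h.mem h.subset

lemma of_sdiff (h₁ : IsLobe G W a W₁) (h : IsLobe G (W \ W₁) c D) (ha : a ∉ D) :
    IsLobe G W c D where
  subset := h.subset.trans sdiff_subset
  mem := (mem_sdiff.1 h.mem).1
  notMem := h.notMem
  nonempty := h.nonempty
  closed u hu b hb hub := by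
    refine h.closed hu (mem_sdiff.2 ⟨hb, fun hb₁ ↦ ?_⟩) hub
    obtain ⟨huW, hu₁⟩ := mem_sdiff.1 (h.subset hu)
    obtain rfl | hu₁' := mem_insert.1 (h₁.closed hb₁ huW hub.symm)
    exacts [ha hu, hu₁ hu₁']

lemma connectedOn_insert (h : IsLobe G W c D) (hW : ConnectedOn G W) :
    ConnectedOn G (insert c D) := by
  refine connectedOn_of_forall_cut c fun K hK hc hne _ ↦ ?_
  have hKD : K ⊆ D := (subset_insert_iff_of_notMem hc).1 hK
  obtain ⟨a, ha, b, hb, hab⟩ := hW.exists_adj (hKD.trans h.subset) hne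
    ⟨c, mem_sdiff.2 ⟨h.mem, hc⟩⟩
  obtain ⟨hbW, hbK⟩ := mem_sdiff.1 hb
  exact ⟨a, ha, b, mem_sdiff.2 ⟨h.closed (hKD ha) hbW hab, hbK⟩, hab⟩

lemma connectedOn_sdiff (h : IsLobe G W c D) (hW : ConnectedOn G W) : ConnectedOn G (W \ D) := by
  refine connectedOn_of_forall_cut c fun K hK hc hne ⟨z, hz⟩ ↦ ?_
  obtain ⟨a, ha, b, hb, hab⟩ := hW.exists_adj (hK.trans sdiff_subset) hne
    ⟨z, sdiff_subset_sdiff sdiff_subset le_rfl hz⟩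
  obtain ⟨hbW, hbK⟩ := mem_sdiff.1 hb
  obtain ⟨haW, haD⟩ := mem_sdiff.1 (hK ha)
  refine ⟨a, ha, b, mem_sdiff.2 ⟨mem_sdiff.2 ⟨hbW, fun hbD ↦ ?_⟩, hbK⟩, hab⟩
  obtain rfl | haD' := mem_insert.1 (h.closed hbD haW hab.symm)
  exacts [hc ha, haD haD']

lemma isNonseparable_of_minimal (h : IsLobe G W c D) (hW : ConnectedOn G W)
    (hmin : ∀ c', ∀ K ⊂ D, ¬ IsLobe G W c' K) : IsNonseparable G (insert c D) := by
  refine ⟨h.connectedOn_insert hW, fun e ↦ ?_⟩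
  by_cases he : e ∈ insert c D
  swap
  · simpa only [erase_eq_of_notMem he] using h.connectedOn_insert hW
  refine connectedOn_of_forall_cut c fun K hK hc hne ⟨z, hz⟩ ↦ ?_
  have hKD : K ⊆ D := (subset_insert_iff_of_notMem hc).1 (hK.trans (erase_subset _ _))
  have heK : e ∉ K := fun h ↦ notMem_erase e _ (hK h)
  by_contra! hcut
  have hlobe : IsLobe G W e K := by
    refine ⟨hKD.trans h.subset, h.insert_subset he, heK, hne, fun a ha b hb hab ↦ ?_⟩
    by_contra hbK
    rw [mem_insert, not_or] at hbK
    exact hcut a ha b (mem_sdiff.2 ⟨mem_erase.2 ⟨hbK.1, h.closed (hKD ha) hb hab⟩, hbK.2⟩) hab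
  have hKD' : K ≠ D := by
    rintro rfl
    obtain rfl := (mem_insert.1 he).resolve_right heK
    simp [h.notMem] at hz
  exact hmin e K (hKD.ssubset_of_ne hKD') hlobe

end IsLobe

lemma ConnectedOn.exists_isEndBlock (hW : ConnectedOn G W) (hy : y ∈ W) (hz : z ∈ W)
    (hzy : z ≠ y) : ∃ c D, IsEndBlock G W c D ∧ y ∉ D := by
  have hne : ∃ D, (∃ c, IsLobe G W c D) ∧ y ∉ D :=
    ⟨W.erase y, ⟨y, erase_subset y W, hy, notMem_erase y W, ⟨z, mem_erase.2 ⟨hzy, hz⟩⟩,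
      fun a _ b hb _ ↦ by rwa [insert_erase hy]⟩, notMem_erase y W⟩
  obtain ⟨D, ⟨⟨c, hD⟩, hyD⟩, hmin⟩ := exists_minimal_of_wellFoundedLT _ hne
  exact ⟨c, D, ⟨hD, hD.isNonseparable_of_minimal hW fun c' K hK hK' ↦
    hK.not_subset (hmin ⟨⟨c', hK'⟩, fun h ↦ hyD (hK.subset h)⟩ hK.subset)⟩, hyD⟩

lemma ConnectedOn.exists_two_isEndBlock (hW : ConnectedOn G W) (hW' : ¬ IsNonseparable G W) :
    ∃ c₁ D₁ c₂ D₂, IsEndBlock G W c₁ D₁ ∧ IsEndBlock G W c₂ D₂ ∧ Disjoint D₁ D₂ ∧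
      HasPathIn G ((W \ D₁) \ D₂) c₁ c₂ 0 := by
  obtain ⟨y, hy, z, hz, hyz⟩ : W.Nontrivial := by
    by_contra hsub
    have hsub : (W : Set V).Subsingleton := Set.not_nontrivial_iff.1 hsub
    have : ∀ K ⊆ W, ConnectedOn G K := fun K hK u v ↦
      Subtype.ext (hsub (hK u.2) (hK v.2)) ▸ .refl _
    exact hW' ⟨hW, fun e ↦ this _ (erase_subset e W)⟩
  obtain ⟨c₁, D₁, h₁, -⟩ := hW.exists_isEndBlock hy hz hyz.symm
  have hc₁ : c₁ ∈ W \ D₁ := mem_sdiff.2 ⟨h₁.mem, h₁.notMem⟩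
  obtain ⟨z, hz, hzc⟩ : ∃ z ∈ W \ D₁, z ≠ c₁ := by
    by_contra! hall
    refine hW' ((h₁.insert_subset.antisymm fun t ht ↦ mem_insert.2 ?_) ▸ h₁.nonseparable)
    exact or_iff_not_imp_right.2 fun htD ↦ hall t (mem_sdiff.2 ⟨ht, htD⟩)
  have hW₁ := h₁.connectedOn_sdiff hW
  obtain ⟨c₂, D₂, h₂, hc₁₂⟩ := hW₁.exists_isEndBlock hc₁ hz hzc
  exact ⟨c₁, D₁, c₂, D₂, h₁, ⟨h₁.of_sdiff h₂.toIsLobe hc₁₂, h₂.nonseparable⟩,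
    disjoint_left.2 fun t ht₁ ht₂ ↦ (mem_sdiff.1 (h₂.subset ht₂)).2 ht₁,
    (h₂.connectedOn_sdiff hW₁).hasPathIn (mem_sdiff.2 ⟨hc₁, hc₁₂⟩)
      (mem_sdiff.2 ⟨h₂.mem, h₂.notMem⟩)⟩

lemma IsNonseparable.exists_adj_of_isLobe_erase (hW : IsNonseparable G W) (hx : x ∈ W)
    (hD : IsLobe G (W.erase x) c D) : ∃ a ∈ D, G.Adj x a := by
  have hDc : D ⊆ W.erase c := fun t ht ↦
    mem_erase.2 ⟨ne_of_mem_of_not_mem ht hD.notMem, mem_of_mem_erase (hD.subset ht)⟩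
  have hxD : x ∉ D := fun h ↦ notMem_erase x W (hD.subset h)
  obtain ⟨a, ha, b, hb, hab⟩ := (hW.2 c).exists_adj hDc hD.nonempty
    ⟨x, mem_sdiff.2 ⟨mem_erase.2 ⟨(ne_of_mem_erase hD.mem).symm, hx⟩, hxD⟩⟩
  obtain ⟨⟨hbc, hbW⟩, hbD⟩ : (b ≠ c ∧ b ∈ W) ∧ b ∉ D := by simpa using hb
  obtain rfl : b = x := by
    by_contra hbx
    simpa [hbc, hbD] using hD.closed ha (mem_erase.2 ⟨hbx, hbW⟩) hab
  exact ⟨a, ha, hab.symm⟩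

/- Walk from `x` into an end block of `W - x` that avoids `y`, traverse that block by induction,
and go on to `y` outside of it. -/
lemma IsNonseparable.hasPathIn [DecidableRel G.Adj] (hW : IsNonseparable G W) (hx : x ∈ W)
    (hy : y ∈ W) (hxy : x ≠ y) (hdeg : ∀ w ∈ W, w ≠ y → k ≤ #{u ∈ W | G.Adj w u}) :
    HasPathIn G W x y k := by
  induction k generalizing W x y with
  | zero => exact hW.1.hasPathIn hx hy
  | succ k ih =>
    obtain rfl | hk := k.eq_zero_or_pos
    · exact (hW.1.hasPathIn hx hy).one_of_ne hxy
    have hyx : y ∈ W.erase x := mem_erase.2 ⟨hxy.symm, hy⟩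
    obtain ⟨z, hz, hzy⟩ := exists_mem_ne ((Nat.succ_lt_succ hk).trans_le (hdeg x hx hxy)) y
    obtain ⟨hzW, hxz⟩ := mem_filter.1 hz
    obtain ⟨c, D, hD, hyD⟩ :=
      (hW.2 x).exists_isEndBlock hyx (mem_erase.2 ⟨hxz.ne', hzW⟩) hzy
    obtain ⟨a, ha, hxa⟩ := hW.exists_adj_of_isLobe_erase hx hD.toIsLobe
    have hdeg' : ∀ w ∈ insert c D, w ≠ c → k ≤ #{u ∈ insert c D | G.Adj w u} := by
      intro w hw hwc
      have hwD := (mem_insert.1 hw).resolve_left hwc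
      have hsub : {u ∈ W | G.Adj w u} ⊆ insert x {u ∈ insert c D | G.Adj w u} := by
        intro u hu
        obtain ⟨huW, hwu⟩ := mem_filter.1 hu
        refine mem_insert.2 (or_iff_not_imp_left.2 fun hux ↦ mem_filter.2 ⟨?_, hwu⟩)
        exact hD.closed hwD (mem_erase.2 ⟨hux, huW⟩) hwu
      have := hdeg w (mem_of_mem_erase (hD.subset hwD)) (ne_of_mem_of_not_mem hwD hyD)
      have := (card_le_card hsub).trans (card_insert_le _ _)
      omega
    have hac := ne_of_mem_of_not_mem ha hD.notMem
    have hblock := ih hD.nonseparable (mem_insert_of_mem ha) (mem_insert_self c D) hac hdeg'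
    have hrest := (hD.connectedOn_sdiff (hW.2 x)).hasPathIn
      (mem_sdiff.2 ⟨hD.mem, hD.notMem⟩) (mem_sdiff.2 ⟨hyx, hyD⟩)
    have hpath := hblock.append hrest fun u hu hu' ↦
      (mem_insert.1 hu).resolve_right (mem_sdiff.1 hu').2
    have hsub : insert c D ∪ W.erase x \ D ⊆ W.erase x :=
      union_subset hD.insert_subset sdiff_subset
    refine (hpath.cons hxa fun h ↦ notMem_erase x W (hsub h)).mono ?_ le_rfl
    exact Finset.insert_subset hx (hsub.trans (erase_subset x W))

end VertexSets

section Connectivity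

open Finset

variable {G : SimpleGraph V} {k : ℕ}

/- The deficiency version of Hall's theorem: add `d` dummy partners which everybody accepts. -/
lemma exists_matching_of_card_le_add {α β : Type*} [Fintype α] [DecidableEq β] [Nonempty β]
    (t : α → Finset β) (d : ℕ) (h : ∀ S : Finset α, #S ≤ #(S.biUnion t) + d) :
    ∃ (A : Finset α) (g : α → β),
      Fintype.card α ≤ #A + d ∧ Set.InjOn g A ∧ ∀ a ∈ A, g a ∈ t a := by
  classical
  let partners (a : α) : Finset (β ⊕ Fin d) := (t a).disjSum univ
  have hall : ∀ S : Finset α, #S ≤ #(S.biUnion partners) := by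
    intro S
    obtain rfl | ⟨a, ha⟩ := S.eq_empty_or_nonempty
    · simp
    have hsub : (S.biUnion t).disjSum univ ⊆ S.biUnion partners := by
      rintro (b | i) hb
      · simpa [partners] using hb
      · simpa [partners] using ⟨a, ha⟩
    simpa using (h S).trans_eq (by simp) |>.trans (card_le_card hsub)
  obtain ⟨f, hf, hft⟩ := (all_card_le_biUnion_card_iff_exists_injective partners).1 hall
  let A : Finset α := {a | (f a).isLeft}
  have hdummy : #Aᶜ ≤ d := by
    have hmaps : ∀ a ∈ Aᶜ, f a ∈ (univ : Finset (Fin d)).map .inr := by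
      intro a ha
      cases hfa : f a with
      | inl b => simp [A, hfa] at ha
      | inr i => simp
    simpa using card_le_card_of_injOn f hmaps hf.injOn
  have hleft : ∀ a ∈ A, ∃ b, f a = .inl b := fun a ha ↦ by
    simpa [A, Sum.isLeft_iff] using ha
  choose! g hg using hleft
  refine ⟨A, g, by rw [card_compl] at hdummy; omega, fun a ha b hb hab ↦ hf ?_, fun a ha ↦ ?_⟩
  · rw [hg a ha, hg b hb, hab]
  · simpa [partners, hg a ha] using hft a

/- König's theorem: a set `S` with too few partners would give the vertex cover `Sᶜ ∪ t(S)`. -/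
lemma exists_matching_of_forall_cover {α β : Type*} [Finite α] [Finite β] [Nonempty β]
    {R : α → β → Prop}
    (h : ∀ (X : Finset α) (Y : Finset β), (∀ a b, R a b → a ∈ X ∨ b ∈ Y) → k ≤ #X + #Y) :
    ∃ (A : Finset α) (g : α → β), #A = k ∧ Set.InjOn g A ∧ ∀ a ∈ A, R a (g a) := by
  classical
  have := Fintype.ofFinite α
  have := Fintype.ofFinite β
  have hk : k ≤ Fintype.card α := by simpa using h univ ∅ (by simp)
  let t (a : α) : Finset β := {b | R a b}
  have hdef : ∀ S : Finset α, #S ≤ #(S.biUnion t) + (Fintype.card α - k) := by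
    intro S
    have hcover := h Sᶜ (S.biUnion t) fun a b hab ↦ by
      by_cases ha : a ∈ S
      exacts [.inr (mem_biUnion.2 ⟨a, ha, by simpa [t] using hab⟩), .inl (mem_compl.2 ha)]
    have := S.card_le_univ
    rw [card_compl] at hcover
    omega
  obtain ⟨B, g, hB, hg, hgR⟩ := exists_matching_of_card_le_add t _ hdef
  obtain ⟨A, hAB, hA⟩ := exists_subset_card_eq (show k ≤ #B by omega)
  exact ⟨A, g, hA, hg.mono hAB, fun a ha ↦ by simpa [t] using hgR a (hAB ha)⟩

variable [Fintype V]

lemma KConnected.connected (h : KConnected G k) (hk : 0 < k) : G.Connected := by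
  have hV : Nonempty V := Fintype.card_pos_iff.1 (by have := h.1; omega)
  refine ⟨fun u v ↦ ?_⟩
  have hconn := (h.2 ∅ (by simpa using hk)).preconnected
  exact (hconn ⟨u, by simp⟩ ⟨v, by simp⟩).map (Embedding.induce _).toHom

lemma KConnected.le_card_of_separates (h : KConnected G k) {D S : Finset V} {x y : V}
    (hS : ∀ a ∈ D, ∀ b ∉ D, G.Adj a b → a ∈ S ∨ b ∈ S) (hxD : x ∈ D) (hxS : x ∉ S)
    (hyD : y ∉ D) (hyS : y ∉ S) : k ≤ #S := by
  by_contra! hk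
  obtain ⟨p⟩ := (h.2 S hk).preconnected ⟨x, by simpa using hxS⟩ ⟨y, by simpa using hyS⟩
  obtain ⟨d, -, ha, hb⟩ := p.exists_boundary_dart {u | (u : V) ∈ D} hxD hyD
  exact (hS d.fst ha d.snd hb d.adj).elim d.fst.2 d.snd.2

lemma KConnected.le_minDegree [DecidableRel G.Adj] (h : KConnected G k) : k ≤ G.minDegree := by
  classical
  have : Nonempty V := Fintype.card_pos_iff.1 (by have := h.1; omega)
  refine G.le_minDegree_of_forall_le_degree k fun v ↦ ?_
  rw [← card_neighborFinset_eq_degree]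
  by_contra! hv
  obtain ⟨y, hy⟩ : ∃ y, y ∉ insert v (G.neighborFinset v) := by
    by_contra! hall
    have := card_le_card (fun y _ ↦ hall y : univ ⊆ insert v (G.neighborFinset v))
    have := card_insert_le v (G.neighborFinset v)
    have := h.1
    rw [card_univ] at *
    omega
  rw [mem_insert, not_or] at hy
  refine hv.not_ge (h.le_card_of_separates (D := {v}) (x := v) (y := y) ?_ (by simp) (by simp)
    (by simpa using hy.1) hy.2)
  simp +contextual

lemma KConnected.exists_isCycle (h : KConnected G k) (hk : 2 ≤ k) :
    ∃ (v : V) (w : G.Walk v v), w.IsCycle := by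
  classical
  by_contra! hcyc
  have : Nontrivial V := Fintype.one_lt_card_iff_nontrivial.1 (by have := h.1; omega)
  have := (IsTree.mk (h.connected (by omega)) hcyc).minDegree_eq_one_of_nontrivial
  have := h.le_minDegree
  omega

end Connectivity

section Cycles

open Finset

variable {G : SimpleGraph V} {f : ℕ → V} {n p q l : ℕ}

/-- `f` runs through a cycle of length `n` of `G` again and again, so that an arc of the cycle is
the image of an interval, even if it passes through `f 0`. -/
structure IsCycleEnum (G : SimpleGraph V) (f : ℕ → V) (n : ℕ) : Prop where
  three_le : 3 ≤ n
  eq_iff : ∀ i j, f i = f j ↔ i ≡ j [MOD n]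
  adj : ∀ i, G.Adj (f i) (f (i + 1))

lemma exists_isCycleEnum {v : V} {w : G.Walk v v} (hw : w.IsCycle) :
    ∃ f, IsCycleEnum G f w.length := by
  have hpos : 0 < w.length := by have := hw.three_le_length; omega
  have hlt (k : ℕ) : k % w.length < w.length := Nat.mod_lt k hpos
  refine ⟨fun k ↦ w.getVert (k % w.length), hw.three_le_length, fun i j ↦ ?_, fun i ↦ ?_⟩
  · exact ⟨fun h ↦ hw.getVert_injOn' (Nat.le_sub_one_of_lt (hlt i))
      (Nat.le_sub_one_of_lt (hlt j)) h, fun h ↦ congrArg w.getVert h⟩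
  have hadj := w.adj_getVert_succ (hlt i)
  have hsucc : w.getVert (i % w.length + 1) = w.getVert ((i + 1) % w.length) := by
    obtain h | h := (Nat.succ_le_of_lt (hlt i)).lt_or_eq
    · rw [← Nat.mod_add_mod, Nat.mod_eq_of_lt h]
    · rw [← Nat.mod_add_mod, ← Nat.succ_eq_add_one, h, Nat.mod_self, w.getVert_zero,
        w.getVert_length]
  rwa [hsucc] at hadj

namespace IsCycleEnum

lemma add_period (hf : IsCycleEnum G f n) (k : ℕ) : f (k + n) = f k :=
  (hf.eq_iff _ _).2 (by simp [Nat.ModEq])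

lemma congr_add_right (hf : IsCycleEnum G f n) {i j : ℕ} (h : f i = f j) (t : ℕ) :
    f (i + t) = f (j + t) :=
  (hf.eq_iff _ _).2 (((hf.eq_iff _ _).1 h).add_right t)

lemma injOn (hf : IsCycleEnum G f n) (t : ℕ) :
    Set.InjOn (fun k ↦ f (t + k)) (range n : Set ℕ) := by
  intro i hi j hj hij
  have hmod := Nat.ModEq.add_left_cancel' t ((hf.eq_iff _ _).1 hij)
  exact hmod.eq_of_lt_of_lt (mem_range.1 hi) (mem_range.1 hj)

lemma ne_of_lt (hf : IsCycleEnum G f n) (hpq : p < q) (hq : q < p + n) : f p ≠ f q := by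
  obtain ⟨d, rfl⟩ := Nat.exists_eq_add_of_lt hpq
  intro h
  have := hf.injOn p (mem_range.2 (by omega)) (mem_range.2 (by omega))
    (by simpa [add_assoc] using h : f (p + 0) = f (p + (d + 1)))
  omega

lemma exists_eq_of_mem_range (hf : IsCycleEnum G f n) {a : V} (ha : a ∈ Set.range f) (t : ℕ) :
    ∃ i < n, f (t + i) = a := by
  obtain ⟨k, rfl⟩ := ha
  have hn : 0 < n := by have := hf.three_le; omega
  refine ⟨(k + n * t - t) % n, Nat.mod_lt _ hn, (hf.eq_iff _ _).2 ?_⟩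
  have ht : t ≤ k + n * t := (Nat.le_mul_of_pos_left t hn).trans (Nat.le_add_left _ _)
  calc t + (k + n * t - t) % n ≡ t + (k + n * t - t) [MOD n] := (Nat.mod_modEq _ _).add_left t
    _ = k + n * t := Nat.add_sub_cancel' ht
    _ ≡ k [MOD n] := by simp [Nat.ModEq]

variable [DecidableEq V]

lemma image_filter_range (hf : IsCycleEnum G f n) {N : Finset V} (hN : (N : Set V) ⊆ Set.range f)
    (t : ℕ) : {k ∈ range n | f (t + k) ∈ N}.image (fun k ↦ f (t + k)) = N := by
  ext a
  constructor
  · simp only [mem_image, mem_filter]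
    rintro ⟨k, ⟨-, hk⟩, rfl⟩
    exact hk
  · intro ha
    obtain ⟨k, hk, rfl⟩ := hf.exists_eq_of_mem_range (hN ha) t
    exact mem_image_of_mem _ (mem_filter.2 ⟨mem_range.2 hk, ha⟩)

lemma sum_eq (hf : IsCycleEnum G f n) {N : Finset V} (hN : (N : Set V) ⊆ Set.range f) (t : ℕ)
    (w : V → ℕ) : ∑ a ∈ N, w a = ∑ k ∈ range n with f (t + k) ∈ N, w (f (t + k)) := by
  conv_lhs => rw [← hf.image_filter_range hN t]
  exact sum_image ((hf.injOn t).mono (filter_subset _ _))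

lemma card_image_range (hf : IsCycleEnum G f n) : #((range n).image f) = n := by
  rw [card_image_of_injOn (by simpa using hf.injOn 0), card_range]

lemma arc (hf : IsCycleEnum G f n) (hpq : p ≤ q) (hq : q < p + n) :
    HasPathIn G ((Icc p q).image f) (f p) (f q) (q - p) := by
  induction hpq using Nat.decreasingInduction with
  | self => exact ⟨.nil, by simp, by simp, by simp⟩
  | of_succ p hpq ih =>
    have hp : f p ∉ (Icc (p + 1) q).image f := by
      simp only [mem_image, mem_Icc, not_exists, not_and]
      exact fun k hk h ↦ hf.ne_of_lt (p := p) (q := k) (by omega) (by omega) h.symm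
    refine ((ih (by omega)).cons (hf.adj p) hp).mono ?_ (by omega)
    rw [← image_insert]
    exact image_subset_image fun k ↦ by simp only [mem_insert, mem_Icc]; omega

end IsCycleEnum

lemma bddAbove_cycle_lengths [Finite V] (G : SimpleGraph V) :
    BddAbove {n | ∃ (v : V) (w : G.Walk v v), w.IsCycle ∧ w.length = n} := by
  have := Fintype.ofFinite V
  refine ⟨Fintype.card V, ?_⟩
  rintro n ⟨v, w, hw, rfl⟩
  have hlt := (Walk.isCycle_iff_isPath_tail_and_le_length.1 hw).1.length_lt
  have := Walk.length_tail_add_one hw.not_nil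
  omega

variable [Fintype V]

lemma exists_isCycleEnum_circumference (h : ∃ (v : V) (w : G.Walk v v), w.IsCycle) :
    ∃ f, IsCycleEnum G f (circumference G) := by
  have hne : {n | ∃ (v : V) (w : G.Walk v v), w.IsCycle ∧ w.length = n}.Nonempty :=
    let ⟨v, w, hw⟩ := h
    ⟨w.length, v, w, hw, rfl⟩
  obtain ⟨v, w, hw, hlen⟩ := Nat.sSup_mem hne (bddAbove_cycle_lengths G)
  obtain ⟨f, hf⟩ := exists_isCycleEnum hw
  exact ⟨f, by rwa [hlen] at hf⟩

lemma HasPathIn.lt_circumference {W : Finset V} {x y : V} (hl : 2 ≤ l)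
    (hyx : G.Adj y x) : HasPathIn G W x y l → l < circumference G
  | ⟨p, hp, _, hlp⟩ => by
    have hcycle : (Walk.cons hyx p).IsCycle :=
      Walk.isCycle_iff_isPath_tail_and_le_length.2 ⟨by simpa using hp, by simp; omega⟩
    have hle : p.length + 1 ≤ circumference G :=
      le_csSup (bddAbove_cycle_lengths G) ⟨y, _, hcycle, Walk.length_cons hyx p⟩
    omega

lemma card_le_indepNumber {S : Finset V} (hS : ∀ u ∈ S, ∀ v ∈ S, ¬ G.Adj u v) :
    #S ≤ indepNumber G := by
  refine le_csSup ⟨Fintype.card V, ?_⟩ ⟨S, hS, rfl⟩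
  rintro k ⟨s, -, rfl⟩
  exact s.card_le_univ

namespace IsCycleEnum

variable {H : Finset V} {u v : V}

lemma eq_card_or_exists_notMem_range (hf : IsCycleEnum G f n) :
    n = Fintype.card V ∨ ∃ x, x ∉ Set.range f := by
  classical
  refine or_iff_not_imp_right.2 fun hall ↦ ?_
  push Not at hall
  rw [← hf.card_image_range, card_eq_iff_eq_univ]
  refine eq_univ_of_forall fun x ↦ ?_
  obtain ⟨k, hk, hkx⟩ := hf.exists_eq_of_mem_range (hall x) 0
  exact mem_image.2 ⟨k, mem_range.2 hk, by simpa using hkx⟩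

/- Otherwise a detour from `f p` through `H` to `f q` would lengthen the cycle. -/
lemma add_le_of_hasPathIn (hf : IsCycleEnum G f (circumference G)) (hH : ∀ k, f k ∉ H)
    (hpq : p < q) (hq : q ≤ p + circumference G) (hu : G.Adj (f p) u) (hv : G.Adj (f q) v)
    (huv : HasPathIn G H u v l) : p + (l + 2) ≤ q := by
  classical
  have harc := hf.arc hq (by omega)
  rw [hf.add_period] at harc
  have hpath := harc.join hu huv (disjoint_left.2 fun z hz ↦ by
    obtain ⟨k, -, rfl⟩ := mem_image.1 hz
    exact hH k)
  have := hf.three_le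
  by_cases h2 : 2 ≤ p + circumference G - q + l + 1
  · have := hpath.lt_circumference h2 hv.symm
    omega
  · omega

/- Otherwise exchanging the edges after `f p` and `f q` for `f (p + 1) f (q + 1)` and a path
through `H` would lengthen the cycle. -/
lemma not_adj_succ_succ (hf : IsCycleEnum G f (circumference G)) (hH : ∀ k, f k ∉ H)
    (hpq : p < q) (hq : q < p + circumference G) (hu : G.Adj (f p) u) (hv : G.Adj (f q) v)
    (huv : HasPathIn G H u v 0) : ¬ G.Adj (f (p + 1)) (f (q + 1)) := by
  classical
  intro hadj
  have hback := (hf.arc (p := p + 1) (q := q) hpq (by omega)).symm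
  have hforth := hf.arc (p := q + 1) (q := p + circumference G) hq (by omega)
  have harcs := hback.join hadj hforth (disjoint_left.2 fun z hz hz' ↦ by
    obtain ⟨i, hi, rfl⟩ := mem_image.1 hz
    obtain ⟨j, hj, hij⟩ := mem_image.1 hz'
    rw [mem_Icc] at hi hj
    exact hf.ne_of_lt (p := i) (q := j) (by omega) (by omega) hij.symm)
  have hpath := huv.join hv.symm harcs (disjoint_right.2 fun z hz ↦ by
    simp only [← image_union, mem_image] at hz
    obtain ⟨k, -, rfl⟩ := hz
    exact hH k)
  rw [hf.add_period] at hpath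
  have := hpath.lt_circumference (by have := hf.three_le; omega) hu
  omega

end IsCycleEnum

end Cycles

section Gaps

open Finset

variable {G : SimpleGraph V} {f : ℕ → V} {n p q k l : ℕ} {A A' B B' C : Set V}

/-- On the closed walk `f` of period `n`, at least `k` steps are needed from a vertex of `A` to the
next visit to `B`, which may be one round later at the same vertex. -/
def FarApart (f : ℕ → V) (n : ℕ) (A B : Set V) (k : ℕ) : Prop :=
  ∀ ⦃p q⦄, p < q → q ≤ p + n → f p ∈ A → f q ∈ B → p + k ≤ q

namespace FarApart

lemma mono (hA : A' ⊆ A) (hB : B' ⊆ B) (hl : l ≤ k) (h : FarApart f n A B k) :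
    FarApart f n A' B' l :=
  fun _ _ hpq hq hpA hqB ↦ (Nat.add_le_add_left hl _).trans (h hpq hq (hA hpA) (hB hqB))

lemma union_right (hB : FarApart f n A B k) (hC : FarApart f n A C k) :
    FarApart f n A (B ∪ C) k :=
  fun _ _ hpq hq hpA hqBC ↦ hqBC.elim (hB hpq hq hpA) (hC hpq hq hpA)

end FarApart

lemma sum_le_of_forall_add_le {P : Finset ℕ} {w : ℕ → ℕ}
    (hP : ∀ i ∈ P, ∀ j ∈ P, i < j → i + w i ≤ j) (hn : ∀ i ∈ P, i + w i ≤ n) :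
    ∑ i ∈ P, w i ≤ n := by
  induction P using Finset.induction_on_max generalizing n with
  | empty => simp
  | insert m P hm ih =>
    rw [sum_insert fun h ↦ (hm m h).false]
    have hPm := ih
      (fun i hi j hj ↦ hP i (mem_insert_of_mem hi) j (mem_insert_of_mem hj))
      (fun i hi ↦ hP i (mem_insert_of_mem hi) m (mem_insert_self m P) (hm i hi))
    have := hn m (mem_insert_self m P)
    omega

namespace IsCycleEnum

variable {N A T : Finset V}

lemma sum_le (hf : IsCycleEnum G f n) (hN : (N : Set V) ⊆ Set.range f) {w : V → ℕ}
    (hw : ∀ a ∈ N, FarApart f n {a} N (w a)) : ∑ a ∈ N, w a ≤ n := by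
  classical
  obtain rfl | ⟨a, ha⟩ := N.eq_empty_or_nonempty
  · simp
  obtain ⟨t, rfl⟩ := hN ha
  rw [hf.sum_eq hN t]
  have hmem : ∀ i ∈ {k ∈ range n | f (t + k) ∈ N}, i < n ∧ f (t + i) ∈ N := by simp
  refine sum_le_of_forall_add_le (fun i hi j hj hij ↦ ?_) fun i hi ↦ ?_
  · have := (hmem j hj).1
    have := hw _ (hmem i hi).2 (p := t + i) (q := t + j) (by omega) (by omega) rfl (hmem j hj).2
    omega
  · have := (hmem i hi).1
    have := hw _ (hmem i hi).2 (p := t + i) (q := t + n) (by omega) (by omega) rfl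
      (by rwa [hf.add_period])
    omega

lemma two_mul_card_add_sum_le (hf : IsCycleEnum G f n)
    (hN : (N : Set V) ⊆ Set.range f) (hN₂ : FarApart f n N N 2) (hT : T ⊆ N) {e : V → ℕ}
    (he : ∀ a ∈ T, FarApart f n {a} N (e a + 2)) : 2 * #N + ∑ a ∈ T, e a ≤ n := by
  classical
  have hsum := hf.sum_le hN (w := fun a ↦ 2 + if a ∈ T then e a else 0) fun a ha ↦ by
    by_cases haT : a ∈ T
    · simpa [haT, add_comm] using he a haT
    · simpa [haT] using hN₂.mono (by simpa using ha) le_rfl le_rfl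
  rwa [sum_add_distrib, sum_ite_mem, inter_eq_right.2 hT, sum_const, smul_eq_mul, mul_comm] at hsum

lemma two_mul_card_union_add_le [DecidableEq V] (hf : IsCycleEnum G f n) {N₁ N₂ : Finset V}
    (hN : ((N₁ ∪ N₂ : Finset V) : Set V) ⊆ Set.range f)
    (hN₂ : FarApart f n (N₁ ∪ N₂ : Finset V) (N₁ ∪ N₂ : Finset V) 2)
    (h₁₂ : FarApart f n N₁ N₂ (l + 2)) (h₂₁ : FarApart f n N₂ N₁ (l + 2)) :
    2 * #(N₁ ∪ N₂) + #(N₁ ∩ N₂) * l ≤ n := by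
  have hcount := hf.two_mul_card_add_sum_le hN hN₂ (T := N₁ ∩ N₂) (e := fun _ ↦ l)
    inter_subset_union fun a ha ↦ ?_
  · rwa [sum_const, smul_eq_mul] at hcount
  · rw [mem_inter] at ha
    rw [coe_union]
    exact (h₂₁.mono (by simpa using ha.2) le_rfl le_rfl).union_right
      (h₁₂.mono (by simpa using ha.1) le_rfl le_rfl)

lemma two_mul_card_add_mul_add_le {S : Finset V} (hf : IsCycleEnum G f n)
    (hN : (N : Set V) ⊆ Set.range f) (hN₂ : FarApart f n N N 2)
    (hS : S ⊆ N) (hSk : ∀ a ∈ S, FarApart f n {a} N (k + 2))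
    (hT : T ⊆ N) (hTl : ∀ a ∈ T, FarApart f n {a} N (l + 2)) (hST : #S < #T) :
    2 * #N + (#S * k + l) ≤ n := by
  classical
  obtain ⟨z, hzT, hzS⟩ := exists_mem_notMem_of_card_lt_card hST
  have hne : ∀ a ∈ S, a ≠ z := fun a ha ↦ ne_of_mem_of_not_mem ha hzS
  have hcount := hf.two_mul_card_add_sum_le hN hN₂ (T := insert z S)
    (e := fun a ↦ if a = z then l else k) (insert_subset (hT hzT) hS) fun a ha ↦ ?_
  · rwa [sum_insert hzS, if_pos rfl, sum_congr rfl fun a ha ↦ if_neg (hne a ha), sum_const,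
      smul_eq_mul, add_comm l] at hcount
  · obtain rfl | ha := mem_insert.1 ha
    · simpa using hTl a hzT
    · simpa [hne a ha] using hSk a ha

lemma farApart_singleton (hf : IsCycleEnum G f n)
    (h : ∀ q, p < q → q ≤ p + n → f q ∈ B → p + k ≤ q) : FarApart f n {f p} B k := by
  intro r q hrq hq hrp hqB
  have hshift := hf.congr_add_right hrp (q - r)
  rw [Nat.add_sub_cancel' hrq.le] at hshift
  have := h (p + (q - r)) (by omega) (by omega) (hshift ▸ hqB)
  omega

section Labels

variable {ι : Type*} {R : V → ι → Prop} {i j : ι}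

/- The last vertex labelled `i` before `f q` is followed by a vertex with another label. -/
lemma exists_farApart_between (hf : IsCycleEnum G f n) (hN : ∀ a ∈ N, ∃ i, R a i)
    (hR : ∀ i j, i ≠ j → FarApart f n {a | R a i} {a | R a j} k) (hij : i ≠ j) (hpq : p < q)
    (hq : q ≤ p + n) (hpN : f p ∈ N) (hp : R (f p) i) (hqj : R (f q) j) :
    ∃ r, p ≤ r ∧ r < q ∧ f r ∈ N ∧ FarApart f n {f r} N k := by
  classical
  obtain ⟨r, hr, hmax⟩ := exists_max_image {r ∈ Ico p q | f r ∈ N ∧ R (f r) i} id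
    ⟨p, by simp [hpq, hpN, hp]⟩
  obtain ⟨⟨hpr, hrq⟩, hrN, hri⟩ : (p ≤ r ∧ r < q) ∧ f r ∈ N ∧ R (f r) i := by simpa using hr
  refine ⟨r, hpr, hrq, hrN, hf.farApart_singleton fun s hrs hs hsN ↦ ?_⟩
  obtain hsq | hqs := lt_or_ge s q
  · obtain ⟨j', hj'⟩ := hN _ hsN
    refine hR i j' (fun h ↦ ?_) hrs hs hri hj'
    have : s ≤ r := hmax s (mem_filter.2 ⟨mem_Ico.2 ⟨by omega, hsq⟩, hsN, h ▸ hj'⟩)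
    omega
  · exact (hR i j hij hrq (hq.trans (by omega)) hri hqj).trans hqs

variable {label : V → ι}

lemma exists_farApart_before_next (hf : IsCycleEnum G f n) (hN : ∀ a ∈ N, ∃ i, R a i)
    (hR : ∀ i j, i ≠ j → FarApart f n {a | R a i} {a | R a j} k) (hAN : A ⊆ N)
    (hA : (A : Set V) ⊆ Set.range f) (hlabel : ∀ a ∈ A, R a (label a))
    (hinj : Set.InjOn label A) (hA₂ : 1 < #A) {a : V} (ha : a ∈ A) :
    ∃ p s, f p = a ∧ (∀ t, 0 < t → t ≤ s → f (p + t) ∉ A) ∧ f (p + s) ∈ N ∧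
      FarApart f n {f (p + s)} N k := by
  classical
  obtain ⟨p, rfl⟩ := hA ha
  obtain ⟨b, hb, hbp⟩ := exists_mem_ne hA₂ (f p)
  have hex : ∃ d, 0 < d ∧ d < n ∧ f (p + d) ∈ A := by
    obtain ⟨d, hd, rfl⟩ := hf.exists_eq_of_mem_range (hA hb) p
    exact ⟨d, Nat.pos_of_ne_zero fun h ↦ hbp (by rw [h, add_zero]), hd, hb⟩
  obtain ⟨hd, hdn, hdA⟩ := Nat.find_spec hex
  set d := Nat.find hex
  have hne : label (f p) ≠ label (f (p + d)) := fun h ↦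
    hf.ne_of_lt (by omega) (by omega) (hinj ha hdA h)
  obtain ⟨r, hpr, hr, hrN, hfar⟩ := hf.exists_farApart_between hN hR hne
    (Nat.lt_add_of_pos_right hd) (by omega) (hAN ha) (hlabel _ ha) (hlabel _ hdA)
  obtain ⟨s, rfl⟩ := Nat.exists_eq_add_of_le hpr
  exact ⟨p, s, rfl, fun t ht hts htA ↦ Nat.find_min hex (by omega) ⟨ht, by omega, htA⟩, hrN, hfar⟩

lemma exists_farApart_of_labels (hf : IsCycleEnum G f n) (hN : ∀ a ∈ N, ∃ i, R a i)
    (hR : ∀ i j, i ≠ j → FarApart f n {a | R a i} {a | R a j} k) (hAN : A ⊆ N)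
    (hA : (A : Set V) ⊆ Set.range f) (hlabel : ∀ a ∈ A, R a (label a))
    (hinj : Set.InjOn label A) (hA₂ : 1 < #A) :
    ∃ T ⊆ N, #T = #A ∧ ∀ a ∈ T, FarApart f n {a} N k := by
  classical
  choose! p s hp hnext hN' hfar using
    fun a ↦ hf.exists_farApart_before_next hN hR hAN hA hlabel hinj hA₂ (a := a)
  have hle : ∀ a ∈ A, ∀ b ∈ A, f (p a + s a) = f (p b + s b) → s b ≤ s a := by
    intro a ha b hb hab
    by_contra! hlt
    have hshift : f (p b + (s b - s a)) = f (p a) := by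
      refine (hf.eq_iff _ _).2 (Nat.ModEq.add_right_cancel' (s a) ?_)
      rw [add_assoc, Nat.sub_add_cancel hlt.le]
      exact ((hf.eq_iff _ _).1 hab).symm
    exact hnext b hb _ (by omega) (by omega) (hshift ▸ (hp a ha).symm ▸ ha)
  have hinj' : Set.InjOn (fun a ↦ f (p a + s a)) A := fun a ha b hb hab ↦ by
    have hs := (hle b hb a ha hab.symm).antisymm (hle a ha b hb hab)
    rw [← hp a ha, ← hp b hb, hf.eq_iff]
    refine Nat.ModEq.add_right_cancel' (s a) ((hf.eq_iff _ _).1 ?_)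
    simpa only [hs] using hab
  refine ⟨A.image fun a ↦ f (p a + s a), ?_, card_image_of_injOn hinj', ?_⟩
  · exact image_subset_iff.2 hN'
  · exact forall_mem_image.2 hfar

end Labels

lemma exists_two_farApart [DecidableEq V] (hf : IsCycleEnum G f n) {N₁ N₂ : Finset V}
    (h₁ : (N₁ : Set V) ⊆ Set.range f) (h₂ : (N₂ : Set V) ⊆ Set.range f)
    (h₁₂ : FarApart f n N₁ N₂ k) (h₂₁ : FarApart f n N₂ N₁ k) (hN₁ : 0 < #N₁) (hN₂ : 1 < #N₂) :
    ∃ T ⊆ N₁ ∪ N₂, #T = 2 ∧ ∀ a ∈ T, FarApart f n {a} (N₁ ∪ N₂ : Finset V) k := by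
  obtain ⟨a, ha⟩ := card_pos.1 hN₁
  obtain ⟨b, hb, hba⟩ := exists_mem_ne hN₂ a
  have hcard : #{a, b} = 2 := card_pair hba.symm
  rw [← hcard]
  refine hf.exists_farApart_of_labels (R := fun x i ↦ x ∈ bif i then N₁ else N₂)
    (label := fun x ↦ decide (x = a)) ?_ ?_ ?_ ?_ ?_ ?_ (by omega)
  · exact fun x hx ↦ (mem_union.1 hx).elim (⟨true, ·⟩) (⟨false, ·⟩)
  · rintro (_ | _) (_ | _) hij
    exacts [absurd rfl hij, h₂₁, h₁₂, absurd rfl hij]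
  · exact insert_subset (mem_union_left _ ha) (singleton_subset_iff.2 (mem_union_right _ hb))
  · simpa [Set.insert_subset_iff] using ⟨h₁ ha, h₂ hb⟩
  · simp [ha, hb, hba]
  · simp [Set.injOn_insert, hba, hba.symm]

end IsCycleEnum

end Gaps

section Components

open Finset

variable {G : SimpleGraph V} {X : Set V} {H D D₁ D₂ : Finset V} {c u v w x y : V} {k l m : ℕ}

/-- `H` is the vertex set of a component of the graph that is left of `G` when the vertices in `X`
are removed. -/
structure IsComponentOff (G : SimpleGraph V) (X : Set V) (H : Finset V) : Prop where
  nonempty : H.Nonempty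
  notMem : ∀ ⦃a⦄, a ∈ H → a ∉ X
  connectedOn : ConnectedOn G H
  closed : ∀ ⦃a⦄, a ∈ H → ∀ ⦃b⦄, G.Adj a b → b ∈ H ∨ b ∈ X

lemma exists_isComponentOff [Finite V] (G : SimpleGraph V) (hx : x ∉ X) :
    ∃ H, IsComponentOff G X H := by
  classical
  have := Fintype.ofFinite V
  have hex : ∃ H : Finset V, H.Nonempty ∧ (∀ ⦃a⦄, a ∈ H → a ∉ X) ∧
      ∀ ⦃a⦄, a ∈ H → ∀ ⦃b⦄, G.Adj a b → b ∈ H ∨ b ∈ X :=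
    ⟨({a | a ∉ X} : Finset V), ⟨x, by simpa using hx⟩, fun a ha ↦ by simpa using ha,
      fun a _ b _ ↦ by simpa using (em (b ∈ X)).symm⟩
  obtain ⟨H, ⟨hne, hX, hclosed⟩, hmin⟩ := exists_minimal_of_wellFoundedLT _ hex
  obtain ⟨c, hc⟩ := hne
  refine ⟨H, ⟨c, hc⟩, hX, connectedOn_of_forall_cut c fun K hK hcK hKne _ ↦ ?_, hclosed⟩
  by_contra! hcut
  refine hcK (hmin ⟨hKne, fun a ha ↦ hX (hK ha), fun a ha b hab ↦ ?_⟩ hK hc)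
  refine (hclosed (hK ha) hab).imp_left fun hb ↦ ?_
  by_contra hbK
  exact hcut a ha b (mem_sdiff.2 ⟨hb, hbK⟩) hab

variable [Fintype V]

open Classical in
/-- The vertices of `X` with a neighbour in `D`, where `D` is usually a part of a component of `G`
without `X`. -/
noncomputable def attachments (G : SimpleGraph V) (X : Set V) (D : Finset V) : Finset V :=
  {a | a ∈ X ∧ ∃ u ∈ D, G.Adj a u}

lemma mem_attachments : x ∈ attachments G X D ↔ x ∈ X ∧ ∃ u ∈ D, G.Adj x u := by
  simp [attachments]

lemma attachments_subset (G : SimpleGraph V) (X : Set V) (D : Finset V) :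
    (attachments G X D : Set V) ⊆ X :=
  fun _ ha ↦ (mem_attachments.1 ha).1

lemma attachments_mono (h : D₁ ⊆ D₂) : attachments G X D₁ ⊆ attachments G X D₂ := by
  intro a ha
  obtain ⟨haX, u, hu, hau⟩ := mem_attachments.1 ha
  exact mem_attachments.2 ⟨haX, u, h hu, hau⟩

lemma attachments_union [DecidableEq V] :
    attachments G X (D₁ ∪ D₂) = attachments G X D₁ ∪ attachments G X D₂ := by
  ext a
  simp only [mem_attachments, mem_union, or_and_right, exists_or, and_or_left]

lemma card_attachments_singleton_le (hw : w ∈ D) :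
    #(attachments G X {w}) ≤ #(attachments G X D) :=
  card_le_card (attachments_mono (singleton_subset_iff.2 hw))

lemma card_attachments_union_add_card_inter [DecidableEq V] :
    #(attachments G X (D₁ ∪ D₂)) + #(attachments G X D₁ ∩ attachments G X D₂) =
      #(attachments G X D₁) + #(attachments G X D₂) := by
  rw [attachments_union, card_union_add_card_inter]

lemma pos_of_forall_card_attachments_le (hm : ∀ w ∈ D, #(attachments G X {w}) ≤ m)
    (hD : (attachments G X D).Nonempty) : 0 < m := by
  obtain ⟨a, ha⟩ := hD
  obtain ⟨haX, u, hu, hau⟩ := mem_attachments.1 ha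
  have hau' : a ∈ attachments G X {u} := mem_attachments.2 ⟨haX, u, mem_singleton_self u, hau⟩
  exact (card_pos.2 ⟨a, hau'⟩).trans_le (hm u hu)

namespace IsComponentOff

lemma le_card_attachments (h : IsComponentOff G X H) (hk : KConnected G k) (hy : y ∈ X)
    (hyN : y ∉ attachments G X H) : k ≤ #(attachments G X H) := by
  obtain ⟨x, hx⟩ := h.nonempty
  refine hk.le_card_of_separates (fun a ha b hb hab ↦ .inr ?_) hx
    (fun hxN ↦ h.notMem hx (attachments_subset G X H hxN)) (fun hyH ↦ h.notMem hyH hy) hyN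
  exact mem_attachments.2 ⟨(h.closed ha hab).resolve_left hb, a, ha, hab.symm⟩

lemma le_card_attachments_add_one [DecidableEq V] (h : IsComponentOff G X H)
    (hk : KConnected G k) (hD : IsLobe G H c D) (hy : y ∈ X) (hyN : y ∉ attachments G X H) :
    k ≤ #(attachments G X D) + 1 := by
  obtain ⟨x, hx⟩ := hD.nonempty
  have hyH : y ∉ H := fun hyH ↦ h.notMem hyH hy
  refine (hk.le_card_of_separates (D := D) (S := insert c (attachments G X D)) (x := x) (y := y)
    (fun a ha b hb hab ↦ .inr ?_) hx ?_ (fun hyD ↦ hyH (hD.subset hyD)) ?_).trans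
      (card_insert_le _ _)
  · obtain hbH | hbX := h.closed (hD.subset ha) hab
    · exact mem_insert.2 (.inl ((mem_insert.1 (hD.closed ha hbH hab)).resolve_right hb))
    · exact mem_insert_of_mem (mem_attachments.2 ⟨hbX, a, ha, hab.symm⟩)
  · rw [mem_insert, not_or]
    exact ⟨ne_of_mem_of_not_mem hx hD.notMem,
      fun hxN ↦ h.notMem (hD.subset hx) (attachments_subset G X D hxN)⟩
  · rw [mem_insert, not_or]
    exact ⟨(ne_of_mem_of_not_mem hD.mem hyH).symm,
      fun hyD ↦ hyN (attachments_mono hD.subset hyD)⟩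

lemma exists_matching (h : IsComponentOff G X H) (hk : KConnected G k) (hH : k ≤ #H)
    (hN : k ≤ #(attachments G X H)) : ∃ (A : Finset V) (g : V → V),
      #A = k ∧ Set.InjOn g A ∧ ∀ a ∈ A, a ∈ X ∧ g a ∈ H ∧ G.Adj a (g a) := by
  classical
  have : Nonempty V := h.nonempty.to_type
  refine exists_matching_of_forall_cover (R := fun a u ↦ a ∈ X ∧ u ∈ H ∧ G.Adj a u)
    fun P Q hcover ↦ ?_
  by_contra! hPQ
  have hS : #(P ∪ Q) < k := (card_union_le P Q).trans_lt hPQ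
  obtain ⟨x, hx, hxS⟩ := exists_mem_notMem_of_card_lt_card (hS.trans_le hH)
  obtain ⟨y, hy, hyS⟩ := exists_mem_notMem_of_card_lt_card (hS.trans_le hN)
  refine hS.not_ge (hk.le_card_of_separates (fun a ha b hb hab ↦ ?_) hx hxS
    (fun hyH ↦ h.notMem hyH (attachments_subset G X H hy)) hyS)
  have hbX := (h.closed ha hab).resolve_left hb
  exact (hcover b a ⟨hbX, ha, hab.symm⟩).elim (fun hP ↦ .inr (mem_union_left Q hP))
    fun hQ ↦ .inl (mem_union_right P hQ)

variable [DecidableRel G.Adj]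

lemma minDegree_le (h : IsComponentOff G X H) (hw : w ∈ H) :
    G.minDegree ≤ #(attachments G X {w}) + #{u ∈ H | G.Adj w u} := by
  classical
  have hsub : G.neighborFinset w ⊆ attachments G X {w} ∪ {u ∈ H | G.Adj w u} := by
    intro b hb
    have hwb := (G.mem_neighborFinset w b).1 hb
    obtain hbH | hbX := h.closed hw hwb
    · exact mem_union_right _ (mem_filter.2 ⟨hbH, hwb⟩)
    · exact mem_union_left _ (mem_attachments.2 ⟨hbX, w, mem_singleton_self w, hwb.symm⟩)
  calc G.minDegree ≤ #(G.neighborFinset w) := G.minDegree_le_degree w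
    _ ≤ _ := (card_le_card hsub).trans (card_union_le _ _)

lemma minDegree_lt_add_card (h : IsComponentOff G X H) (hw : w ∈ H) :
    G.minDegree < #(attachments G X {w}) + #H := by
  have hlt : #{u ∈ H | G.Adj w u} < #H := card_lt_card
    (filter_ssubset.2 ⟨w, hw, G.irrefl⟩)
  exact (h.minDegree_le hw).trans_lt (Nat.add_lt_add_left hlt _)

variable [DecidableEq V]

lemma hasPathIn_of_isEndBlock (h : IsComponentOff G X H) (hD : IsEndBlock G H c D)
    (hm : ∀ w ∈ D, #(attachments G X {w}) ≤ m) (hu : u ∈ D) :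
    HasPathIn G (insert c D) u c (G.minDegree - m) := by
  refine hD.nonseparable.hasPathIn (mem_insert_of_mem hu) (mem_insert_self c D)
    (ne_of_mem_of_not_mem hu hD.notMem) fun w hw hwc ↦ ?_
  have hwD := (mem_insert.1 hw).resolve_left hwc
  have hdeg := h.minDegree_le (hD.subset hwD)
  have := hm w hwD
  have hsub : {u ∈ H | G.Adj w u} ⊆ {u ∈ insert c D | G.Adj w u} := fun b hb ↦ by
    obtain ⟨hbH, hwb⟩ := mem_filter.1 hb
    exact mem_filter.2 ⟨hD.closed hwD hbH hwb, hwb⟩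
  have := card_le_card hsub
  omega

lemma hasPathIn_of_isNonseparable (h : IsComponentOff G X H) (hH : IsNonseparable G H)
    (hm : ∀ w ∈ H, w ≠ v → #(attachments G X {w}) ≤ m) (hu : u ∈ H) (hv : v ∈ H) (huv : u ≠ v) :
    HasPathIn G H u v (G.minDegree - m) := by
  have hu' : u ∈ H.erase v := mem_erase.2 ⟨huv, hu⟩
  have hpath := h.hasPathIn_of_isEndBlock (hH.isEndBlock_erase hv ⟨u, hu'⟩)
    (fun w hw ↦ hm w (mem_of_mem_erase hw) (ne_of_mem_erase hw)) hu'
  rwa [insert_erase hv] at hpath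

lemma hasPathIn_of_mem_erase (h : IsComponentOff G X H) (hH : IsNonseparable G H) (hv : v ∈ H)
    (hm : ∀ w ∈ H.erase v, #(attachments G X {w}) ≤ m) :
    ∀ u ∈ ({v} : Finset V), ∀ w ∈ H.erase v, HasPathIn G H u w (G.minDegree - m) := by
  simp only [mem_singleton, forall_eq]
  exact fun w hw ↦ (h.hasPathIn_of_isNonseparable hH
    (fun x hx hxv ↦ hm x (mem_erase.2 ⟨hxv, hx⟩)) (mem_of_mem_erase hw) hv
    (ne_of_mem_erase hw)).symm

lemma hasPathIn_of_two_isEndBlock (h : IsComponentOff G X H) {c₁ c₂ : V} {m₁ m₂ : ℕ}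
    (hD₁ : IsEndBlock G H c₁ D₁) (hD₂ : IsEndBlock G H c₂ D₂) (hD : Disjoint D₁ D₂)
    (hc : HasPathIn G ((H \ D₁) \ D₂) c₁ c₂ 0)
    (hm₁ : ∀ w ∈ D₁, #(attachments G X {w}) ≤ m₁) (hm₂ : ∀ w ∈ D₂, #(attachments G X {w}) ≤ m₂)
    (hu : u ∈ D₁) (hv : v ∈ D₂) :
    HasPathIn G H u v ((G.minDegree - m₁) + (G.minDegree - m₂)) := by
  have hcv := hc.append (h.hasPathIn_of_isEndBlock hD₂ hm₂ hv).symm fun z hz hz' ↦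
    (mem_insert.1 hz').resolve_right (mem_sdiff.1 hz).2
  have huv := (h.hasPathIn_of_isEndBlock hD₁ hm₁ hu).append hcv fun z hz hz' ↦ by
    refine (mem_insert.1 hz).resolve_right fun hzD₁ ↦ ?_
    obtain hz' | hz' := mem_union.1 hz'
    · exact (mem_sdiff.1 (mem_sdiff.1 hz').1).2 hzD₁
    · obtain rfl | hzD₂ := mem_insert.1 hz'
      · exact (mem_sdiff.1 (mem_sdiff.1 hc.end_mem).1).2 hzD₁
      · exact disjoint_left.1 hD hzD₁ hzD₂
  refine huv.mono ?_ (by omega)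
  exact union_subset hD₁.insert_subset
    (union_subset (sdiff_subset.trans sdiff_subset) hD₂.insert_subset)

end IsComponentOff

end Components

section LongestCycles

open Finset

variable [Fintype V] {G : SimpleGraph V} {f : ℕ → V} {H D D₁ D₂ : Finset V} {c : V} {k l : ℕ}

namespace IsCycleEnum

lemma farApart_attachments (hf : IsCycleEnum G f (circumference G))
    (h : IsComponentOff G (Set.range f) H)
    (hpath : ∀ u ∈ D₁, ∀ v ∈ D₂, HasPathIn G H u v l) :
    FarApart f (circumference G) (attachments G (Set.range f) D₁)
      (attachments G (Set.range f) D₂) (l + 2) := by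
  intro p q hpq hq hp hqN
  obtain ⟨-, u, hu, hpu⟩ := mem_attachments.1 hp
  obtain ⟨-, v, hv, hqv⟩ := mem_attachments.1 hqN
  exact hf.add_le_of_hasPathIn (fun k hk ↦ h.notMem hk ⟨k, rfl⟩) hpq hq hpu hqv (hpath u hu v hv)

lemma farApart_attachments_two (hf : IsCycleEnum G f (circumference G))
    (h : IsComponentOff G (Set.range f) H) (hD₁ : D₁ ⊆ H) (hD₂ : D₂ ⊆ H) :
    FarApart f (circumference G) (attachments G (Set.range f) D₁)
      (attachments G (Set.range f) D₂) 2 :=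
  hf.farApart_attachments h fun _ hu _ hv ↦ h.connectedOn.hasPathIn (hD₁ hu) (hD₂ hv)

lemma succ_notMem_attachments (hf : IsCycleEnum G f (circumference G))
    (h : IsComponentOff G (Set.range f) H) {p : ℕ}
    (hp : f p ∈ attachments G (Set.range f) H) : f (p + 1) ∉ attachments G (Set.range f) H := by
  intro hp'
  have := hf.three_le
  have := hf.farApart_attachments_two h le_rfl le_rfl p.lt_succ_self (by omega) hp hp'
  omega

lemma exists_notMem_attachments (hf : IsCycleEnum G f (circumference G))
    (h : IsComponentOff G (Set.range f) H) :
    ∃ y ∈ Set.range f, y ∉ attachments G (Set.range f) H := by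
  by_cases h₀ : f 0 ∈ attachments G (Set.range f) H
  exacts [⟨f 1, ⟨1, rfl⟩, hf.succ_notMem_attachments h h₀⟩, ⟨f 0, ⟨0, rfl⟩, h₀⟩]

lemma le_card_attachments (hf : IsCycleEnum G f (circumference G))
    (h : IsComponentOff G (Set.range f) H) (hk : KConnected G k) :
    k ≤ #(attachments G (Set.range f) H) :=
  let ⟨_, hyX, hy⟩ := hf.exists_notMem_attachments h
  h.le_card_attachments hk hyX hy

lemma le_card_attachments_add_one [DecidableEq V] (hf : IsCycleEnum G f (circumference G))
    (h : IsComponentOff G (Set.range f) H) (hk : KConnected G k) (hD : IsLobe G H c D) :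
    k ≤ #(attachments G (Set.range f) D) + 1 :=
  let ⟨_, hyX, hy⟩ := hf.exists_notMem_attachments h
  h.le_card_attachments_add_one hk hD hyX hy

lemma not_adj_succ_succ_of_mem_attachments (hf : IsCycleEnum G f (circumference G))
    (h : IsComponentOff G (Set.range f) H) {p q : ℕ} (hpc : p < circumference G)
    (hqc : q < circumference G) (hp : f p ∈ attachments G (Set.range f) H)
    (hq : f q ∈ attachments G (Set.range f) H) : ¬ G.Adj (f (p + 1)) (f (q + 1)) := by
  wlog hpq : p < q generalizing p q
  · obtain rfl | hqp := (not_lt.1 hpq).eq_or_lt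
    exacts [G.irrefl, fun hadj ↦ this hqc hpc hq hp hqp hadj.symm]
  obtain ⟨-, u, hu, hpu⟩ := mem_attachments.1 hp
  obtain ⟨-, v, hv, hqv⟩ := mem_attachments.1 hq
  exact hf.not_adj_succ_succ (fun k hk ↦ h.notMem hk ⟨k, rfl⟩) hpq (by omega) hpu hqv
    (h.connectedOn.hasPathIn hu hv)

/- The successors of the attachments on the cycle and a vertex of `H` are independent. -/
lemma card_attachments_lt_indepNumber (hf : IsCycleEnum G f (circumference G))
    (h : IsComponentOff G (Set.range f) H) :
    #(attachments G (Set.range f) H) < indepNumber G := by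
  classical
  set N := attachments G (Set.range f) H
  have hN : (N : Set V) ⊆ Set.range f := attachments_subset G _ H
  obtain ⟨x, hx⟩ := h.nonempty
  let P := {p ∈ range (circumference G) | f (0 + p) ∈ N}
  let S := P.image fun p ↦ f (1 + p)
  have hS : #S = #N := by
    rw [← hf.image_filter_range hN 0,
      card_image_of_injOn ((hf.injOn 1).mono (filter_subset _ _)),
      card_image_of_injOn ((hf.injOn 0).mono (filter_subset _ _))]
  have hmem : ∀ z ∈ S, ∃ p < circumference G, f p ∈ N ∧ f (p + 1) = z := by
    simp [S, P, add_comm 1, and_assoc]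
  have hxS : ∀ z ∈ S, ¬ G.Adj z x := by
    intro z hz hadj
    obtain ⟨p, -, hp, rfl⟩ := hmem z hz
    exact hf.succ_notMem_attachments h hp (mem_attachments.2 ⟨⟨p + 1, rfl⟩, x, hx, hadj⟩)
  have hx' : x ∉ S := by
    intro hxS
    obtain ⟨p, -, -, rfl⟩ := hmem x hxS
    exact h.notMem hx ⟨p + 1, rfl⟩
  rw [← hS, Nat.lt_iff_add_one_le, ← card_insert_of_notMem hx']
  refine card_le_indepNumber fun u hu v hv hadj ↦ ?_
  obtain rfl | huS := mem_insert.1 hu <;> obtain rfl | hvS := mem_insert.1 hv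
  · exact G.irrefl hadj
  · exact hxS v hvS hadj.symm
  · exact hxS u huS hadj
  · obtain ⟨p, hpc, hp, rfl⟩ := hmem u huS
    obtain ⟨q, hqc, hq, rfl⟩ := hmem v hvS
    exact hf.not_adj_succ_succ_of_mem_attachments h hpc hqc hp hq hadj

end IsCycleEnum

end LongestCycles

section Counting

open Finset

variable [Fintype V] {G : SimpleGraph V} {f : ℕ → V}
  {H D₁ D₂ : Finset V} {c₁ c₂ v : V} {l : ℕ}

namespace IsCycleEnum

/- Three disjoint edges join the cycle to `H`. Between two of them, the neighbours in `H` of the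
attachments must change somewhere, and every change costs a long gap. -/
lemma exists_three_farApart_attachments (hf : IsCycleEnum G f (circumference G))
    (h : IsComponentOff G (Set.range f) H) (hk : KConnected G 3) (hH : 3 ≤ #H)
    (hpath : ∀ u ∈ H, ∀ v ∈ H, u ≠ v → HasPathIn G H u v l) :
    ∃ T ⊆ attachments G (Set.range f) H, #T = 3 ∧ ∀ a ∈ T,
      FarApart f (circumference G) {a} (attachments G (Set.range f) H) (l + 2) := by
  obtain ⟨A, g, hA, hinj, hAg⟩ := h.exists_matching hk hH (hf.le_card_attachments h hk)
  rw [← hA]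
  refine hf.exists_farApart_of_labels (R := fun a u ↦ u ∈ H ∧ G.Adj a u) (label := g)
    (fun a ha ↦ (mem_attachments.1 ha).2) (fun u v huv p q hpq hq hp hqv ↦ ?_)
    (fun a ha ↦ mem_attachments.2 ⟨(hAg a ha).1, g a, (hAg a ha).2⟩)
    (fun a ha ↦ (hAg a ha).1) (fun a ha ↦ (hAg a ha).2) hinj (by omega)
  exact hf.add_le_of_hasPathIn (fun k hk ↦ h.notMem hk ⟨k, rfl⟩) hpq hq hp.2 hqv.2
    (hpath u hp.1 v hqv.1 huv)

variable [DecidableEq V]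

lemma two_mul_card_attachments_union_add_le (hf : IsCycleEnum G f (circumference G))
    (h : IsComponentOff G (Set.range f) H) (hD₁ : D₁ ⊆ H) (hD₂ : D₂ ⊆ H)
    (hpath : ∀ u ∈ D₁, ∀ v ∈ D₂, HasPathIn G H u v l) :
    2 * #(attachments G (Set.range f) (D₁ ∪ D₂)) +
      #(attachments G (Set.range f) D₁ ∩ attachments G (Set.range f) D₂) * l ≤
      circumference G := by
  rw [attachments_union]
  refine hf.two_mul_card_union_add_le ?_ ?_ (hf.farApart_attachments h hpath)
    (hf.farApart_attachments h fun u hu v hv ↦ (hpath v hv u hu).symm)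
  · rw [← attachments_union]
    exact attachments_subset G _ _
  · rw [← attachments_union]
    exact hf.farApart_attachments_two h (union_subset hD₁ hD₂) (union_subset hD₁ hD₂)

lemma exists_two_farApart_attachments (hf : IsCycleEnum G f (circumference G))
    (h : IsComponentOff G (Set.range f) H)
    (hpath : ∀ u ∈ D₁, ∀ v ∈ D₂, HasPathIn G H u v l)
    (h₁ : 0 < #(attachments G (Set.range f) D₁)) (h₂ : 1 < #(attachments G (Set.range f) D₂)) :
    ∃ T ⊆ attachments G (Set.range f) (D₁ ∪ D₂), #T = 2 ∧ ∀ a ∈ T,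
      FarApart f (circumference G) {a} (attachments G (Set.range f) (D₁ ∪ D₂)) (l + 2) := by
  rw [attachments_union]
  exact hf.exists_two_farApart (attachments_subset G _ _) (attachments_subset G _ _)
    (hf.farApart_attachments h hpath)
    (hf.farApart_attachments h fun u hu v hv ↦ (hpath v hv u hu).symm) h₁ h₂

variable [DecidableRel G.Adj]

lemma three_mul_minDegree_le_of_two_isEndBlock (hf : IsCycleEnum G f (circumference G))
    (h : IsComponentOff G (Set.range f) H) (hk : KConnected G 3)
    (hlt : #(attachments G (Set.range f) H) < G.minDegree)
    (hD₁ : IsEndBlock G H c₁ D₁) (hD₂ : IsEndBlock G H c₂ D₂) (hD : Disjoint D₁ D₂)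
    (hc : HasPathIn G ((H \ D₁) \ D₂) c₁ c₂ 0) :
    3 * G.minDegree ≤ circumference G + 3 := by
  set N := attachments G (Set.range f)
  obtain ⟨w₁, hw₁, hm₁⟩ := exists_max_image D₁ (fun w ↦ #(N {w})) hD₁.nonempty
  obtain ⟨w₂, hw₂, hm₂⟩ := exists_max_image D₂ (fun w ↦ #(N {w})) hD₂.nonempty
  obtain ⟨L, hL⟩ : ∃ L, L = (G.minDegree - #(N {w₁})) + (G.minDegree - #(N {w₂})) := ⟨_, rfl⟩
  have hpath : ∀ u ∈ D₁, ∀ v ∈ D₂, HasPathIn G H u v L := fun u hu v hv ↦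
    hL ▸ h.hasPathIn_of_two_isEndBlock hD₁ hD₂ hD hc hm₁ hm₂ hu hv
  have hN₁ : 3 ≤ #(N D₁) + 1 := hf.le_card_attachments_add_one h hk hD₁.toIsLobe
  have hN₂ : 3 ≤ #(N D₂) + 1 := hf.le_card_attachments_add_one h hk hD₂.toIsLobe
  obtain ⟨T, hTN, hT, hTfar⟩ := hf.exists_two_farApart_attachments h hpath
    (by omega : 0 < #(N D₁)) (by omega : 1 < #(N D₂))
  have hsub : D₁ ∪ D₂ ⊆ H := union_subset hD₁.subset hD₂.subset
  have htwo : 2 * #(N (D₁ ∪ D₂)) + 2 * L ≤ circumference G := by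
    have hsum := hf.two_mul_card_add_sum_le (attachments_subset G _ _)
      (hf.farApart_attachments_two h hsub hsub) hTN hTfar
    rwa [sum_const, smul_eq_mul, hT] at hsum
  have hinter : 2 * #(N (D₁ ∪ D₂)) + #(N D₁ ∩ N D₂) * L ≤ circumference G :=
    hf.two_mul_card_attachments_union_add_le h hD₁.subset hD₂.subset hpath
  have hcard : #(N (D₁ ∪ D₂)) + #(N D₁ ∩ N D₂) = #(N D₁) + #(N D₂) :=
    card_attachments_union_add_card_inter
  have hmN₁ : #(N {w₁}) ≤ #(N D₁) := card_attachments_singleton_le hw₁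
  have hmN₂ : #(N {w₂}) ≤ #(N D₂) := card_attachments_singleton_le hw₂
  have hNH₁ : #(N D₁) ≤ #(N H) := card_le_card (attachments_mono hD₁.subset)
  have hNH₂ : #(N D₂) ≤ #(N H) := card_le_card (attachments_mono hD₂.subset)
  obtain hi | hi := le_total #(N D₁ ∩ N D₂) 2
  · omega
  · have := mul_add_mul_le_mul_add_mul hi (by omega : 2 ≤ L)
    omega

lemma two_mul_card_attachments_add_le_of_isNonseparable
    (hf : IsCycleEnum G f (circumference G)) (h : IsComponentOff G (Set.range f) H)
    (hk : KConnected G 3) (hH : IsNonseparable G H) (hcard : 3 ≤ #H) (hv : v ∈ H)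
    (hm : ∀ w ∈ H, #(attachments G (Set.range f) {w}) ≤ #(attachments G (Set.range f) {v}))
    (hl : ∀ u ∈ ({v} : Finset V), ∀ w ∈ H.erase v, HasPathIn G H u w l) :
    2 * #(attachments G (Set.range f) H) +
      (2 * l + (G.minDegree - #(attachments G (Set.range f) {v}))) ≤ circumference G := by
  set N := attachments G (Set.range f)
  have hNH : (N H).Nonempty := card_pos.1 (three_pos.trans_le (hf.le_card_attachments h hk))
  have herase : (H.erase v).Nonempty := card_pos.1 (by rw [card_erase_of_mem hv]; omega)
  have hNerase : 3 ≤ #(N (H.erase v)) + 1 :=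
    hf.le_card_attachments_add_one h hk (hH.isEndBlock_erase hv herase).toIsLobe
  obtain ⟨S, hSN, hS, hSfar⟩ := hf.exists_two_farApart_attachments h hl
    (pos_of_forall_card_attachments_le hm hNH)
    (by omega : 1 < #(N (H.erase v)))
  rw [show {v} ∪ H.erase v = H from insert_erase hv] at hSN hSfar
  obtain ⟨T, hTN, hT, hTfar⟩ := hf.exists_three_farApart_attachments h hk hcard
    fun u hu w hw ↦ h.hasPathIn_of_isNonseparable hH (fun x hx _ ↦ hm x hx) hu hw
  have hcount := hf.two_mul_card_add_mul_add_le (attachments_subset G _ _)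
    (hf.farApart_attachments_two h le_rfl le_rfl) hSN hSfar hTN hTfar (by omega)
  rwa [hS] at hcount

lemma three_mul_minDegree_le_of_isNonseparable (hf : IsCycleEnum G f (circumference G))
    (h : IsComponentOff G (Set.range f) H) (hk : KConnected G 3)
    (hlt : #(attachments G (Set.range f) H) < G.minDegree) (hH : IsNonseparable G H) :
    3 * G.minDegree ≤ circumference G + 3 := by
  set N := attachments G (Set.range f)
  obtain ⟨v, hv, hm⟩ := exists_max_image H (fun w ↦ #(N {w})) h.nonempty
  have hmN : #(N {v}) ≤ #(N H) := card_attachments_singleton_le hv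
  have hvH : G.minDegree < #(N {v}) + #H := h.minDegree_lt_add_card hv
  obtain ⟨w, hw, hr⟩ := exists_max_image (H.erase v) (fun w ↦ #(N {w}))
    (card_pos.1 (by rw [card_erase_of_mem hv]; omega))
  have hwH : G.minDegree < #(N {w}) + #H := h.minDegree_lt_add_card (mem_of_mem_erase hw)
  obtain ⟨L, hL⟩ : ∃ L, L = G.minDegree - #(N {w}) := ⟨_, rfl⟩
  have hpath : ∀ u ∈ ({v} : Finset V), ∀ x ∈ H.erase v, HasPathIn G H u x L :=
    hL ▸ h.hasPathIn_of_mem_erase hH hv hr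
  have hunion : {v} ∪ H.erase v = H := insert_erase hv
  have hinter : 2 * #(N H) + #(N {v} ∩ N (H.erase v)) * L ≤ circumference G := by
    simpa only [hunion] using hf.two_mul_card_attachments_union_add_le h
      (singleton_subset_iff.2 hv) (erase_subset v H) hpath
  have hcard : #(N H) + #(N {v} ∩ N (H.erase v)) = #(N {v}) + #(N (H.erase v)) := by
    simpa only [hunion] using
      card_attachments_union_add_card_inter (X := Set.range f) (D₁ := {v}) (D₂ := H.erase v)
  have hrN : #(N {w}) ≤ #(N (H.erase v)) := card_attachments_singleton_le hw
  have hNN : #(N (H.erase v)) ≤ #(N H) := card_le_card (attachments_mono (erase_subset v H))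
  have hmax : #(N {w}) ≤ #(N {v}) := hm w (mem_of_mem_erase hw)
  obtain hi | hi := le_or_gt 3 #(N {v} ∩ N (H.erase v))
  · have := mul_add_mul_le_mul_add_mul hi (by omega : 1 ≤ L)
    omega
  · have him : #(N {v} ∩ N (H.erase v)) ≤ #(N {v}) := card_le_card inter_subset_left
    have hNH : 3 ≤ #(N H) := hf.le_card_attachments h hk
    have hthree : 2 * #(N H) + (2 * L + (G.minDegree - #(N {v}))) ≤ circumference G :=
      hf.two_mul_card_attachments_add_le_of_isNonseparable h hk hH (by omega) hv hm hpath
    omega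

end IsCycleEnum

end Counting

theorem jung_circumference (G : SimpleGraph V) [Fintype V] [DecidableRel G.Adj]
    (h3 : KConnected G 3)
    (hα : indepNumber G ≤ G.minDegree) :
    (circumference G : ℤ) ≥ min (Fintype.card V : ℤ) (3 * G.minDegree - 3) := by
  classical
  obtain ⟨f, hf⟩ := exists_isCycleEnum_circumference (h3.exists_isCycle (by omega))
  obtain hcard | ⟨x, hx⟩ := hf.eq_card_or_exists_notMem_range
  · omega
  obtain ⟨H, hH⟩ := exists_isComponentOff G hx
  have hN := (hf.card_attachments_lt_indepNumber hH).trans_le hα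
  have hbound : 3 * G.minDegree ≤ circumference G + 3 := by
    by_cases hsep : IsNonseparable G H
    · exact hf.three_mul_minDegree_le_of_isNonseparable hH h3 hN hsep
    · obtain ⟨c₁, D₁, c₂, D₂, hD₁, hD₂, hD, hc⟩ := hH.connectedOn.exists_two_isEndBlock hsep
      exact hf.three_mul_minDegree_le_of_two_isEndBlock hH h3 hN hD₁ hD₂ hD hc
  omega
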